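/- arXiv:0903.0156 — 3 statements merged into one kernel-verified Lean document; each statement's English description precedes it below -/
import Mathlib

section
/- For each i ≥ 0, the image under V of N^tmf_{8i} (the F_2-span of the monomials of T of weight 8i) is exactly M_bo(4i), the F_2-span of the monomials of B of weight at most 4i. (This identifies the image of the weight-8i component of H_* tmf with the i-th bo-Brown–Gitler module.) -/
open MvPolynomial

noncomputable section

/-- The dual Steenrod algebra at p = 2: the polynomial algebra `F₂[ζ₁, ζ₂, …]`
over `F₂ = ZMod 2` with variables indexed by the positive integers. -/
abbrev DualSteenrod : Type := MvPolynomial ℕ+ (ZMod 2)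

/-- The weight of the monomial `ζ^I`: `ω(ζ^I) = Σᵢ Iᵢ · 2^(i-1)`. -/
def wt (I : ℕ+ →₀ ℕ) : ℕ := I.sum fun i e => e * 2 ^ ((i : ℕ) - 1)

/-- The degree of the monomial `ζ^I`: `deg(ζ^I) = Σᵢ Iᵢ · (2^i − 1)`,
coming from the grading `deg(ζᵢ) = 2^i − 1`. -/
def degW (I : ℕ+ →₀ ℕ) : ℕ := I.sum fun i e => e * (2 ^ (i : ℕ) - 1)

/-- Exponent condition cutting out `T = H_* tmf`: `8 ∣ I₁`, `4 ∣ I₂`, `2 ∣ I₃`. -/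
def Tcond (I : ℕ+ →₀ ℕ) : Prop := 8 ∣ I 1 ∧ 4 ∣ I 2 ∧ 2 ∣ I 3

/-- Exponent condition cutting out `B = H_* bo`: `4 ∣ I₁`, `2 ∣ I₂`. -/
def Bcond (I : ℕ+ →₀ ℕ) : Prop := 4 ∣ I 1 ∧ 2 ∣ I 2

/-- Exponent condition cutting out `Z = H_* HZ`: `2 ∣ I₁`. -/
def Zcond (I : ℕ+ →₀ ℕ) : Prop := 2 ∣ I 1

/-- `T = H_* tmf`: the `F₂`-span of the monomials `ζ^I` with `8 ∣ I₁`, `4 ∣ I₂`, `2 ∣ I₃`. -/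
def Tsub : Submodule (ZMod 2) DualSteenrod :=
  Submodule.span (ZMod 2) {m | ∃ I, Tcond I ∧ m = monomial I (1 : ZMod 2)}

/-- `B = H_* bo`: the `F₂`-span of the monomials `ζ^I` with `4 ∣ I₁`, `2 ∣ I₂`. -/
def Bsub : Submodule (ZMod 2) DualSteenrod :=
  Submodule.span (ZMod 2) {m | ∃ I, Bcond I ∧ m = monomial I (1 : ZMod 2)}

/-- `Z = H_* HZ`: the `F₂`-span of the monomials `ζ^I` with `2 ∣ I₁`. -/
def Zsub : Submodule (ZMod 2) DualSteenrod :=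
  Submodule.span (ZMod 2) {m | ∃ I, Zcond I ∧ m = monomial I (1 : ZMod 2)}

/-- The `F₂`-algebra homomorphism `V : A → A` with `V(ζ₁) = 1` and
`V(ζᵢ) = ζ_{i−1}` for `i ≥ 2`. -/
def V : DualSteenrod →ₐ[ZMod 2] DualSteenrod :=
  aeval fun i : ℕ+ => if i = 1 then 1 else X (i - 1)

/-- `N^tmf_{8i}`: the `F₂`-span of the monomials of `T` of weight `8i`. -/
def Ntmf (i : ℕ) : Submodule (ZMod 2) DualSteenrod :=
  Submodule.span (ZMod 2) {m | ∃ I, Tcond I ∧ wt I = 8 * i ∧ m = monomial I (1 : ZMod 2)}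

/-- `N^bo_{4j}`: the `F₂`-span of the monomials of `B` of weight `4j`. -/
def Nbo (j : ℕ) : Submodule (ZMod 2) DualSteenrod :=
  Submodule.span (ZMod 2) {m | ∃ I, Bcond I ∧ wt I = 4 * j ∧ m = monomial I (1 : ZMod 2)}

/-- `N^Z_{2k}`: the `F₂`-span of the monomials of `Z` of weight `2k`. -/
def NZ (k : ℕ) : Submodule (ZMod 2) DualSteenrod :=
  Submodule.span (ZMod 2) {m | ∃ I, Zcond I ∧ wt I = 2 * k ∧ m = monomial I (1 : ZMod 2)}

/-- `M_bo(4i)`: the `F₂`-span of the monomials of `B` of weight at most `4i`. -/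
def Mbo (i : ℕ) : Submodule (ZMod 2) DualSteenrod :=
  Submodule.span (ZMod 2) {m | ∃ I, Bcond I ∧ wt I ≤ 4 * i ∧ m = monomial I (1 : ZMod 2)}

/-- `M_HZ(2j)`: the `F₂`-span of the monomials of `Z` of weight at most `2j`
(the homology of the `j`-th integral Brown–Gitler spectrum). -/
def MHZ (j : ℕ) : Submodule (ZMod 2) DualSteenrod :=
  Submodule.span (ZMod 2) {m | ∃ I, Zcond I ∧ wt I ≤ 2 * j ∧ m = monomial I (1 : ZMod 2)}

/-- The degree-`d` homogeneous part of `N^tmf_{8i}` (degrees taken in `ℤ`). -/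
def NtmfDeg (i : ℕ) (d : ℤ) : Submodule (ZMod 2) DualSteenrod :=
  Submodule.span (ZMod 2)
    {m | ∃ I, Tcond I ∧ wt I = 8 * i ∧ (degW I : ℤ) = d ∧ m = monomial I (1 : ZMod 2)}

/-- The degree-`d` homogeneous part of `M_bo(4i)` (degrees taken in `ℤ`). -/
def MboDeg (i : ℕ) (d : ℤ) : Submodule (ZMod 2) DualSteenrod :=
  Submodule.span (ZMod 2)
    {m | ∃ I, Bcond I ∧ wt I ≤ 4 * i ∧ (degW I : ℤ) = d ∧ m = monomial I (1 : ZMod 2)}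

/-- The degree-`d` homogeneous part of `N^bo_{4j}` (degrees taken in `ℤ`). -/
def NboDeg (j : ℕ) (d : ℤ) : Submodule (ZMod 2) DualSteenrod :=
  Submodule.span (ZMod 2)
    {m | ∃ I, Bcond I ∧ wt I = 4 * j ∧ (degW I : ℤ) = d ∧ m = monomial I (1 : ZMod 2)}

/-- The degree-`d` homogeneous part of `M_HZ(2j)` (degrees taken in `ℤ`). -/
def MHZdeg (j : ℕ) (d : ℤ) : Submodule (ZMod 2) DualSteenrod :=
  Submodule.span (ZMod 2)
    {m | ∃ I, Zcond I ∧ wt I ≤ 2 * j ∧ (degW I : ℤ) = d ∧ m = monomial I (1 : ZMod 2)}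

/-- The degree-`d` homogeneous part of `T` (degrees taken in `ℤ`). -/
def Tdeg (d : ℤ) : Submodule (ZMod 2) DualSteenrod :=
  Submodule.span (ZMod 2)
    {m | ∃ I, Tcond I ∧ (degW I : ℤ) = d ∧ m = monomial I (1 : ZMod 2)}

/-- The exponent vector `ζ₁^a · (shift of J)`. -/
def upExp (J : ℕ+ →₀ ℕ) (a : ℕ) : ℕ+ →₀ ℕ :=
  Finsupp.single 1 a + J.mapDomain (fun i => i + 1)

theorem succ_inj_pnat : Function.Injective (fun i : ℕ+ => i + 1) :=
  fun _ _ h => add_right_cancel h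

theorem upExp_one (J : ℕ+ →₀ ℕ) (a : ℕ) : upExp J a 1 = a := by
  unfold upExp
  rw [Finsupp.add_apply, Finsupp.mapDomain_notin_range]
  · simp
  · rintro ⟨x, hx⟩
    have := congrArg PNat.val hx
    have h2 := x.pos
    simp at this

theorem upExp_succ (J : ℕ+ →₀ ℕ) (a : ℕ) (i : ℕ+) : upExp J a (i + 1) = J i := by
  unfold upExp
  rw [Finsupp.add_apply, Finsupp.mapDomain_apply succ_inj_pnat J i, Finsupp.single_apply, if_neg]
  · simp
  · intro h
    have := congrArg PNat.val h
    have h2 := i.pos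
    simp at this

theorem exists_upExp (I : ℕ+ →₀ ℕ) : ∃ J a, I = upExp J a := by
  refine ⟨I.comapDomain (fun i => i + 1) succ_inj_pnat.injOn, I 1, ?_⟩
  ext i
  induction i using PNat.recOn with
  | one => rw [upExp_one]
  | succ n _ => rw [upExp_succ]; rfl

theorem wt_upExp (J : ℕ+ →₀ ℕ) (a : ℕ) : wt (upExp J a) = a + 2 * wt J := by
  unfold wt upExp
  rw [Finsupp.sum_add_index' (by simp) (by intros; ring), Finsupp.sum_single_index (by simp),
    Finsupp.sum_mapDomain_index (by simp) (by intros; ring), Finsupp.mul_sum]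
  congr 1
  · simp
  · refine Finsupp.sum_congr fun i _ => ?_
    obtain ⟨k, hk⟩ : ∃ k, (i : ℕ) = k + 1 := ⟨i - 1, by have := i.pos; omega⟩
    simp only [PNat.add_coe, hk, PNat.one_coe, Nat.add_sub_cancel]
    ring

theorem V_upExp (J : ℕ+ →₀ ℕ) (a : ℕ) :
    V (monomial (upExp J a) (1 : ZMod 2)) = monomial J (1 : ZMod 2) := by
  unfold V upExp
  rw [aeval_monomial, map_one, one_mul,
    Finsupp.prod_add_index' (by simp) (by intros; rw [pow_add]),
    Finsupp.prod_single_index (by simp),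
    Finsupp.prod_mapDomain_index (by simp) (by intros; rw [pow_add]), monomial_eq]
  simp only [if_true, one_pow, one_mul, map_one]
  refine Finsupp.prod_congr fun i _ => ?_
  have h : i + 1 ≠ 1 := by
    intro h
    have := congrArg PNat.val h
    have h2 := i.pos
    simp at this
  have h' : i + 1 - 1 = i := by
    apply PNat.eq
    rw [PNat.sub_coe, if_pos (PNat.lt_add_left 1 i)]
    simp
  rw [if_neg h, h']

theorem Tcond_upExp (J : ℕ+ →₀ ℕ) (a : ℕ) : Tcond (upExp J a) ↔ 8 ∣ a ∧ Bcond J := by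
  have h2 : upExp J a 2 = J 1 := upExp_succ J a 1
  have h3 : upExp J a 3 = J 2 := upExp_succ J a 2
  unfold Tcond Bcond
  rw [upExp_one, h2, h3]

theorem four_dvd_wt (J : ℕ+ →₀ ℕ) (h : Bcond J) : 4 ∣ wt J := by
  unfold wt Finsupp.sum
  refine Finset.dvd_sum fun i _ => ?_
  by_cases h1 : i = 1
  · subst h1; exact Dvd.dvd.mul_right h.1 _
  by_cases h2 : i = 2
  · subst h2; exact mul_dvd_mul h.2 (by decide : 2 ∣ 2 ^ (((2 : ℕ+) : ℕ) - 1))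
  have h1' : (i : ℕ) ≠ 1 := fun h => h1 (PNat.eq h)
  have h2' : (i : ℕ) ≠ 2 := fun h => h2 (PNat.eq h)
  have := i.pos
  exact Dvd.dvd.mul_left (pow_dvd_pow 2 (by omega : 2 ≤ (i : ℕ) - 1)) _

/-- For each `i ≥ 0`, the image under `V` of `N^tmf_{8i}` is exactly `M_bo(4i)`. -/
theorem V_image_Ntmf_eq_Mbo :
    ∀ i : ℕ, Submodule.map V.toLinearMap (Ntmf i) = Mbo i := by
  intro i
  unfold Ntmf Mbo
  rw [Submodule.map_span]
  congr 1
  ext m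
  constructor
  · rintro ⟨_, ⟨I, hT, hw, rfl⟩, rfl⟩
    obtain ⟨J, a, rfl⟩ := exists_upExp I
    rw [Tcond_upExp] at hT
    rw [wt_upExp] at hw
    exact ⟨J, hT.2, by omega, V_upExp J a⟩
  · rintro ⟨J, hB, hw, rfl⟩
    have h4 := four_dvd_wt J hB
    refine ⟨_, ⟨upExp J (8 * i - 2 * wt J), ?_, ?_, rfl⟩, V_upExp J _⟩
    · rw [Tcond_upExp]
      exact ⟨by omega, hB⟩
    · rw [wt_upExp]
      omega
end
end

section
/- If m and m' are monomials of B with equal weight ω(m) = ω(m') and V(m) = V(m'), then m = m'. In particular, for each j ≥ 0 the restriction of V to N^bo_{4j} (the F_2-span of the monomials of B of weight 4j) is an injective F_2-linear map. -/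
open MvPolynomial

noncomputable section

/-- The exponent of `V(ζ^I)`. -/
def shiftExp (I : ℕ+ →₀ ℕ) : ℕ+ →₀ ℕ :=
  I.comapDomain (fun i => i + 1) (fun _ _ _ _ h => add_right_cancel h)

lemma shiftExp_decomp (I : ℕ+ →₀ ℕ) :
    I = Finsupp.single 1 (I 1) + (shiftExp I).mapDomain (fun i => i + 1) := by
  have hinj : Function.Injective (fun i : ℕ+ => i + 1) := fun _ _ h => add_right_cancel h
  ext i
  rw [Finsupp.add_apply]
  by_cases hi : i = 1
  · subst hi
    rw [Finsupp.mapDomain_of_notMem_range]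
    · simp
    · rintro ⟨k, hk⟩
      have := congrArg PNat.val hk
      have := k.pos
      simp at *
  · obtain ⟨k, rfl⟩ := PNat.exists_eq_succ_of_ne_one hi
    have := Finsupp.mapDomain_apply hinj (shiftExp I) k
    rw [this, Finsupp.single_eq_of_ne hi]
    rw [zero_add]
    rfl

lemma V_monomial_shift (I : ℕ+ →₀ ℕ) (c : ZMod 2) :
    V (monomial I c) = monomial (shiftExp I) c := by
  conv_lhs => rw [shiftExp_decomp I]
  rw [V, aeval_monomial, Finsupp.prod_add_index' (by simp) (by intros; rw [pow_add]),
    Finsupp.prod_single_index (by simp), Finsupp.prod_mapDomain_index (by simp)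
      (by intros; rw [pow_add]), monomial_eq]
  have h1 : ∀ a : ℕ+, a + 1 ≠ 1 := by
    intro a h
    have := congrArg PNat.val h
    have := a.pos
    simp at *
  simp [algebraMap_eq, h1]

lemma wt_shift (I : ℕ+ →₀ ℕ) :
    wt I = I 1 + wt ((shiftExp I).mapDomain (fun i => i + 1)) := by
  conv_lhs => rw [shiftExp_decomp I]
  unfold wt
  rw [Finsupp.sum_add_index' (by simp) (by intros; rw [add_mul]),
    Finsupp.sum_single_index (by simp)]
  simp

lemma shift_inj {I J : ℕ+ →₀ ℕ} (hw : wt I = wt J) (h : shiftExp I = shiftExp J) : I = J := by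
  have h1 := wt_shift I
  have h2 := wt_shift J
  rw [h] at h1
  have h3 : I 1 = J 1 := by omega
  rw [shiftExp_decomp I, shiftExp_decomp J, h, h3]

lemma Nbo_support {j : ℕ} {z : DualSteenrod} (hz : z ∈ Nbo j) :
    ∀ I, coeff I z ≠ 0 → wt I = 4 * j := by
  induction hz using Submodule.span_induction with
  | mem x hx =>
    obtain ⟨J, -, hJ, rfl⟩ := hx
    intro I hI
    rw [coeff_monomial] at hI
    split_ifs at hI with h
    · rw [← h, hJ]
    · simp at hI
  | zero => simp
  | add x y _ _ hx hy =>
    intro I hI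
    by_cases h : coeff I x = 0
    · exact hy I (by simpa [h] using hI)
    · exact hx I h
  | smul a x _ hx =>
    intro I hI
    exact hx I (fun h => hI (by simp [h]))

/-- Monomials of `B` with equal weight and equal image under `V` coincide;
in particular `V` is injective on each `N^bo_{4j}`. -/
theorem V_injective_on_weight_components_of_B :
    (∀ I I' : ℕ+ →₀ ℕ, Bcond I → Bcond I' → wt I = wt I' →
      V (monomial I (1 : ZMod 2)) = V (monomial I' (1 : ZMod 2)) →
      monomial I (1 : ZMod 2) = monomial I' (1 : ZMod 2)) ∧
    (∀ j : ℕ, ∀ x ∈ Nbo j, ∀ y ∈ Nbo j, V x = V y → x = y) := by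
  constructor
  · intro I I' _ _ hw h
    rw [V_monomial_shift, V_monomial_shift] at h
    rw [shift_inj hw (monomial_left_injective one_ne_zero h)]
  · intro j x hx y hy h
    have hz : x - y ∈ Nbo j := Submodule.sub_mem _ hx hy
    have hV : V (x - y) = 0 := by rw [map_sub, h, sub_self]
    rw [← sub_eq_zero]
    generalize x - y = z at hz hV
    by_contra hne
    obtain ⟨J, hJ⟩ := ne_zero_iff.mp hne
    apply hJ
    have hs := Nbo_support hz
    have hc : coeff (shiftExp J) (V z) = coeff J z := by
      conv_lhs => rw [z.as_sum]
      rw [map_sum, coeff_sum, Finset.sum_eq_single J]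
      · rw [V_monomial_shift, coeff_monomial, if_pos rfl]
      · intro I hI hIJ
        rw [V_monomial_shift, coeff_monomial, if_neg]
        intro hsh
        exact hIJ (shift_inj ((hs I (mem_support_iff.mp hI)).trans (hs J hJ).symm) hsh)
      · intro hn
        exact absurd (mem_support_iff.mpr hJ) hn
    rw [← hc, hV, coeff_zero]
end
end

section
/- As graded F_2-vector spaces, T ≅ ⊕_{0 ≤ j ≤ i} Σ^{8i+4j} M_HZ(2j); concretely, for every degree d ≥ 0 the dimension of the degree-d homogeneous part of T equals the (finite) sum over all pairs of integers 0 ≤ j ≤ i of the dimension of the degree-(d − 8i − 4j) homogeneous part of M_HZ(2j). (This is the graded vector-space content of the paper's theorem that H_* tmf ≅ ⊕_{0 ≤ j ≤ i} Σ^{8i+4j} H_* HZ_j as right A(1)-modules, where HZ_j is the j-th integral Brown–Gitler spectrum with H_* HZ_j = M_HZ(2j).) -/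
open MvPolynomial

noncomputable section

/-- Spans of monomials have dimension the number of monomials. -/
lemma aux_finrank (S : Set (ℕ+ →₀ ℕ)) (hS : S.Finite) (U : Set DualSteenrod)
    (hU : U = (fun I => monomial I (1 : ZMod 2)) '' S) :
    FiniteDimensional (ZMod 2) ↥(Submodule.span (ZMod 2) U) ∧
    Module.finrank (ZMod 2) ↥(Submodule.span (ZMod 2) U) = S.ncard := by
  subst hU
  refine ⟨FiniteDimensional.span_of_finite _ (hS.image _), ?_⟩
  have hr : (fun I => monomial I (1 : ZMod 2)) '' S
      = Set.range (fun I : S => (monomial (I : ℕ+ →₀ ℕ) (1 : ZMod 2) : DualSteenrod)) := by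
    ext x; simp
  rw [hr]
  have := hS.fintype
  have hli : LinearIndependent (ZMod 2)
      (fun I : S => (monomial (I : ℕ+ →₀ ℕ) (1 : ZMod 2) : DualSteenrod)) := by
    have h := (basisMonomials ℕ+ (ZMod 2)).linearIndependent
    rw [coe_basisMonomials] at h
    exact h.comp (fun I : S => (I : ℕ+ →₀ ℕ)) Subtype.val_injective
  rw [finrank_span_eq_card hli, ← Nat.card_eq_fintype_card]
  rfl

lemma aux_term_le (I : ℕ+ →₀ ℕ) (k : ℕ+) : I k * (2 ^ (k : ℕ) - 1) ≤ degW I := by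
  by_cases hk : k ∈ I.support
  · unfold degW Finsupp.sum
    exact Finset.single_le_sum (f := fun i : ℕ+ => I i * (2 ^ (i : ℕ) - 1))
      (fun _ _ => Nat.zero_le _) hk
  · simp at hk
    simp [hk]

lemma aux_finite (d : ℕ) : {I : ℕ+ →₀ ℕ | degW I = d}.Finite := by
  classical
  refine (Set.finite_Iic (Finsupp.indicator (Finset.Icc 1 (Nat.succPNat d))
    (fun _ _ => d))).subset ?_
  intro I hI
  replace hI : degW I = d := hI
  rw [Set.mem_Iic]
  intro k
  have h := aux_term_le I k
  have h2 : (k : ℕ) < 2 ^ (k : ℕ) := Nat.lt_two_pow_self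
  have h3 := k.pos
  rw [hI] at h
  rw [Finsupp.indicator_apply]
  split_ifs with hk
  · exact le_trans (Nat.le_mul_of_pos_right _ (by omega)) h
  · by_contra hne
    apply hk
    rw [Finset.mem_Icc]
    refine ⟨one_le, ?_⟩
    rw [← PNat.coe_le_coe]
    change (k : ℕ) ≤ d + 1
    have : 2 ^ (k : ℕ) - 1 ≤ I k * (2 ^ (k : ℕ) - 1) :=
      Nat.le_mul_of_pos_left _ (by omega)
    omega

lemma aux_wt_even (K : ℕ+ →₀ ℕ) (h : Zcond K) : 2 ∣ wt K := by
  unfold wt Finsupp.sum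
  refine Finset.dvd_sum fun k _ => ?_
  by_cases hk : k = 1
  · subst hk
    exact Dvd.dvd.mul_right h _
  · have : (k : ℕ) ≠ 1 := fun h => hk (PNat.coe_eq_one_iff.mp h)
    have h3 := k.pos
    exact Dvd.dvd.mul_left (dvd_pow_self 2 (by omega)) _

lemma aux_shift_inj : Function.Injective (fun k : ℕ+ => k + 2) :=
  fun _ _ h => add_right_cancel h

/-- Drop the first two exponents. -/
def shDown (I : ℕ+ →₀ ℕ) : ℕ+ →₀ ℕ := I.comapDomain (fun k : ℕ+ => k + 2) aux_shift_inj.injOn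

/-- Prepend two exponents. -/
def shUp (a b : ℕ) (K : ℕ+ →₀ ℕ) : ℕ+ →₀ ℕ :=
  Finsupp.single 1 a + (Finsupp.single 2 b + K.mapDomain (fun k : ℕ+ => k + 2))

lemma shDown_apply (I : ℕ+ →₀ ℕ) (k : ℕ+) : shDown I k = I (k + 2) := by
  simp [shDown]

lemma aux_ne1 (k : ℕ+) : k + 2 ≠ 1 := by
  intro h
  have := congrArg PNat.val h
  have h3 := k.pos
  simp at this

lemma aux_ne2 (k : ℕ+) : k + 2 ≠ 2 := by
  intro h
  have := congrArg PNat.val h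
  have h3 := k.pos
  simp at this

lemma shUp_one (a b : ℕ) (K : ℕ+ →₀ ℕ) : shUp a b K 1 = a := by
  have : Finsupp.mapDomain (fun k : ℕ+ => k + 2) K 1 = 0 :=
    Finsupp.mapDomain_of_notMem_range _ _ (by rintro ⟨k, hk⟩; exact aux_ne1 k hk)
  simp [shUp, this]

lemma shUp_two (a b : ℕ) (K : ℕ+ →₀ ℕ) : shUp a b K 2 = b := by
  have : Finsupp.mapDomain (fun k : ℕ+ => k + 2) K 2 = 0 :=
    Finsupp.mapDomain_of_notMem_range _ _ (by rintro ⟨k, hk⟩; exact aux_ne2 k hk)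
  simp [shUp, this]

lemma shUp_add (a b : ℕ) (K : ℕ+ →₀ ℕ) (k : ℕ+) : shUp a b K (k + 2) = K k := by
  have : Finsupp.mapDomain (fun k : ℕ+ => k + 2) K (k + 2) = K k :=
    Finsupp.mapDomain_apply aux_shift_inj K k
  simp [shUp, this, (aux_ne1 k).symm, (aux_ne2 k).symm]

lemma shDown_shUp (a b : ℕ) (K : ℕ+ →₀ ℕ) : shDown (shUp a b K) = K := by
  ext k
  rw [shDown_apply, shUp_add]

lemma shUp_shDown (I : ℕ+ →₀ ℕ) : shUp (I 1) (I 2) (shDown I) = I := by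
  ext k
  by_cases h1 : k = 1
  · subst h1; rw [shUp_one]
  by_cases h2 : k = 2
  · subst h2; rw [shUp_two]
  obtain ⟨m, rfl⟩ : ∃ m : ℕ+, k = m + 2 := by
    have h1' : (k : ℕ) ≠ 1 := fun h => h1 (PNat.coe_eq_one_iff.mp h)
    have h2' : (k : ℕ) ≠ 2 := fun h => h2 (PNat.eq h)
    have h3 := k.pos
    refine ⟨⟨(k : ℕ) - 2, by omega⟩, PNat.eq ?_⟩
    change (k : ℕ) = ((k : ℕ) - 2) + 2
    omega
  rw [shUp_add, shDown_apply]

lemma degW_add (I J : ℕ+ →₀ ℕ) : degW (I + J) = degW I + degW J := by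
  unfold degW
  exact Finsupp.sum_add_index' (by simp) (by intros; ring)

lemma degW_shUp (a b : ℕ) (K : ℕ+ →₀ ℕ) :
    degW (shUp a b K) = a + 3 * b + degW K + 6 * wt K := by
  have h1 : degW (Finsupp.single 1 a) = a := by simp [degW]
  have h2 : degW (Finsupp.single 2 b) = 3 * b := by
    simp [degW]; omega
  have h3 : degW (K.mapDomain (fun k : ℕ+ => k + 2)) = degW K + 6 * wt K := by
    unfold degW wt
    rw [Finsupp.sum_mapDomain_index (by simp) (by intros; ring)]
    unfold Finsupp.sum
    rw [Finset.mul_sum, ← Finset.sum_add_distrib]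
    refine Finset.sum_congr rfl fun k _ => ?_
    obtain ⟨n, hn⟩ : ∃ n, (k : ℕ) = n + 1 := ⟨(k : ℕ) - 1, by have := k.pos; omega⟩
    have e : ((k + 2 : ℕ+) : ℕ) = n + 3 := by
      rw [PNat.add_coe, hn]; rfl
    beta_reduce
    rw [e, hn]
    have hp : 0 < 2 ^ n := by positivity
    obtain ⟨q, hq⟩ : ∃ q, 2 ^ n = q + 1 := ⟨2 ^ n - 1, by omega⟩
    have e1 : 2 ^ (n + 3) - 1 = 8 * q + 7 := by rw [pow_add, hq]; omega
    have e2 : 2 ^ (n + 1) - 1 = 2 * q + 1 := by rw [pow_add, hq]; omega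
    rw [e1, e2, Nat.add_sub_cancel, hq]
    ring
  unfold shUp
  rw [degW_add, degW_add, h1, h2, h3]
  ring

/-- Monomials of `T` in degree `d`. -/
def TS (d : ℤ) : Set (ℕ+ →₀ ℕ) := {I | Tcond I ∧ (degW I : ℤ) = d}

/-- Monomials of `M_HZ(2j)` in degree `d`. -/
def ZS (j : ℕ) (d : ℤ) : Set (ℕ+ →₀ ℕ) := {I | Zcond I ∧ wt I ≤ 2 * j ∧ (degW I : ℤ) = d}

lemma aux_finite' (d : ℤ) : {I : ℕ+ →₀ ℕ | (degW I : ℤ) = d}.Finite := by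
  refine (aux_finite d.toNat).subset fun I hI => ?_
  simp only [Set.mem_ofPred_eq] at hI ⊢
  omega

lemma TS_finite (d : ℤ) : (TS d).Finite := (aux_finite' d).subset fun _ h => h.2

lemma ZS_finite (j : ℕ) (d : ℤ) : (ZS j d).Finite := (aux_finite' d).subset fun _ h => h.2.2

lemma Tdeg_finrank (d : ℤ) : FiniteDimensional (ZMod 2) ↥(Tdeg d) ∧
    Module.finrank (ZMod 2) ↥(Tdeg d) = (TS d).ncard := by
  refine aux_finrank (TS d) (TS_finite d) _ ?_
  ext m
  simp only [TS, Set.mem_ofPred_eq, Set.mem_image, and_assoc, eq_comm]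

lemma MHZdeg_finrank (j : ℕ) (d : ℤ) :
    Module.finrank (ZMod 2) ↥(MHZdeg j d) = (ZS j d).ncard := by
  refine (aux_finrank (ZS j d) (ZS_finite j d) _ ?_).2
  ext m
  simp only [ZS, Set.mem_ofPred_eq, Set.mem_image, and_assoc, eq_comm]

/-- The index `j` of a monomial of `T`. -/
def jOf (I : ℕ+ →₀ ℕ) : ℕ := (I 2 + 2 * wt (shDown I)) / 4

/-- The index `i` of a monomial of `T`. -/
def iOf (I : ℕ+ →₀ ℕ) : ℕ := I 1 / 8 + jOf I

lemma Zcond_shDown (I : ℕ+ →₀ ℕ) (h : Tcond I) : Zcond (shDown I) := by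
  unfold Zcond
  rw [shDown_apply]
  exact h.2.2

lemma T_deg_eq (I : ℕ+ →₀ ℕ) (h : Tcond I) :
    I 1 + 8 * jOf I = 8 * iOf I ∧ I 2 + 2 * wt (shDown I) = 4 * jOf I ∧
    degW I = 8 * iOf I + 4 * jOf I + degW (shDown I) := by
  have h1 := degW_shUp (I 1) (I 2) (shDown I)
  rw [shUp_shDown] at h1
  have h2 := aux_wt_even _ (Zcond_shDown I h)
  obtain ⟨ha, hb, -⟩ := h
  unfold iOf jOf
  omega

lemma fiber_card (d i j : ℕ) (hj : j ≤ i) :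
    {I | I ∈ TS (d : ℤ) ∧ (iOf I, jOf I) = (i, j)}.ncard
      = (ZS j ((d : ℤ) - 8 * i - 4 * j)).ncard := by
  have him : {I | I ∈ TS (d : ℤ) ∧ (iOf I, jOf I) = (i, j)}
      = (fun K => shUp (8 * (i - j)) (4 * j - 2 * wt K) K) ''
        (ZS j ((d : ℤ) - 8 * i - 4 * j)) := by
    ext I
    simp only [Set.mem_ofPred_eq, Set.mem_image, Prod.mk.injEq]
    constructor
    · rintro ⟨⟨hT, hd⟩, hi, hj'⟩
      obtain ⟨h1, h2, h3⟩ := T_deg_eq I hT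
      rw [hi, hj'] at h1 h3
      rw [hj'] at h2
      refine ⟨shDown I, ⟨Zcond_shDown I hT, by omega, by omega⟩, ?_⟩
      have e1 : 8 * (i - j) = I 1 := by omega
      have e2 : 4 * j - 2 * wt (shDown I) = I 2 := by omega
      rw [e1, e2, shUp_shDown]
    · rintro ⟨K, ⟨hZ, hw, hdeg⟩, rfl⟩
      have hev := aux_wt_even K hZ
      have h1 := degW_shUp (8 * (i - j)) (4 * j - 2 * wt K) K
      have hjj : jOf (shUp (8 * (i - j)) (4 * j - 2 * wt K) K) = j := by
        unfold jOf
        rw [shDown_shUp, shUp_two]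
        omega
      refine ⟨⟨⟨?_, ?_, ?_⟩, ?_⟩, ?_, hjj⟩
      · rw [shUp_one]; omega
      · rw [shUp_two]; omega
      · have : (3 : ℕ+) = 1 + 2 := rfl
        rw [this, shUp_add]; exact hZ
      · omega
      · unfold iOf
        rw [hjj, shUp_one]
        omega
  rw [him]
  refine Set.ncard_image_of_injective _ fun K K' h => ?_
  have := congrArg shDown h
  simpa only [shDown_shUp] using this

lemma ZS_empty (d i j : ℕ) (h : d < i ∨ d < j) :
    (ZS j ((d : ℤ) - 8 * i - 4 * j)).ncard = 0 := by
  rw [Set.ncard_eq_zero (ZS_finite _ _)]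
  ext K
  simp only [ZS, Set.mem_ofPred_eq, Set.mem_empty_iff_false, iff_false]
  rintro ⟨-, -, h3⟩
  omega

/-- As graded `F₂`-vector spaces, `T ≅ ⊕_{0 ≤ j ≤ i} Σ^{8i+4j} M_HZ(2j)`: for every degree
`d ≥ 0`, the degree-`d` part of `T` is finite dimensional and its dimension equals the
(finite) sum over all pairs `0 ≤ j ≤ i` of the dimension of the degree-`(d − 8i − 4j)`
part of `M_HZ(2j)`. -/
theorem tmf_graded_dimension_splitting :
    ∀ d : ℕ,
      FiniteDimensional (ZMod 2) ↥(Tdeg (d : ℤ)) ∧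
      Module.finrank (ZMod 2) ↥(Tdeg (d : ℤ)) =
        ∑ᶠ (i : ℕ) (j : ℕ) (_ : j ≤ i),
          Module.finrank (ZMod 2) ↥(MHZdeg j ((d : ℤ) - 8 * i - 4 * j)) := by
  intro d
  classical
  refine ⟨(Tdeg_finrank d).1, ?_⟩
  rw [(Tdeg_finrank d).2]
  simp only [MHZdeg_finrank]
  have hin : ∀ i j : ℕ, (∑ᶠ (_ : j ≤ i), (ZS j ((d : ℤ) - 8 * i - 4 * j)).ncard)
      = if j ≤ i then (ZS j ((d : ℤ) - 8 * i - 4 * j)).ncard else 0 := by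
    intro i j
    rw [finsum_eq_if]
  simp only [hin]
  have hj : ∀ i : ℕ, (∑ᶠ j : ℕ, if j ≤ i then (ZS j ((d : ℤ) - 8 * i - 4 * j)).ncard else 0)
      = ∑ j ∈ Finset.range (d + 1),
        if j ≤ i then (ZS j ((d : ℤ) - 8 * i - 4 * j)).ncard else 0 := by
    intro i
    refine finsum_eq_sum_of_support_subset _ fun j hj => ?_
    by_contra hn
    simp only [Finset.coe_range, Set.mem_Iio, not_lt] at hn
    apply hj
    simp only [ZS_empty d i j (Or.inr (by omega)), ite_self]
  simp only [hj]
  rw [finsum_eq_sum_of_support_subset (s := Finset.range (d + 1)), ← Finset.sum_product']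
  · rw [Set.ncard_eq_toFinset_card _ (TS_finite d),
      Finset.card_eq_sum_card_fiberwise (f := fun I => (iOf I, jOf I))
        (t := Finset.range (d + 1) ×ˢ Finset.range (d + 1))]
    · refine Finset.sum_congr rfl ?_
      rintro ⟨i, j⟩ -
      rw [← Set.ncard_coe_finset]
      have hs : ((Finset.filter (fun I => (iOf I, jOf I) = (i, j)) (TS_finite d).toFinset :
          Finset (ℕ+ →₀ ℕ)) : Set (ℕ+ →₀ ℕ))
          = {I | I ∈ TS (d : ℤ) ∧ (iOf I, jOf I) = (i, j)} := by
        ext I; simp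
      rw [hs]
      split_ifs with hij
      · exact fiber_card d i j hij
      · rw [Set.ncard_eq_zero ((TS_finite d).subset fun _ h => h.1)]
        ext I
        simp only [Set.mem_ofPred_eq, Set.mem_empty_iff_false, iff_false, Prod.mk.injEq]
        rintro ⟨-, h1, h2⟩
        unfold iOf at h1
        omega
    · intro I hI
      have hI' : I ∈ TS (d : ℤ) := by simpa using hI
      obtain ⟨-, -, h3⟩ := T_deg_eq I hI'.1
      have h4 := hI'.2
      simp only [Finset.coe_product, Set.mem_prod, Finset.coe_range, Set.mem_Iio]
      omega
  · intro i hi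
    by_contra hn
    simp only [Finset.coe_range, Set.mem_Iio, not_lt] at hn
    apply hi
    refine Finset.sum_eq_zero fun j _ => ?_
    simp only [ZS_empty d i j (Or.inl (by omega)), ite_self]
end
end
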